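/- Let X be a Banach space with the diameter two property. Then for any Banach space Y, the ℓ∞-direct sum X ⊕_∞ Y (the product X × Y with norm ‖(x,y)‖ = max{‖x‖,‖y‖}) has the diameter two property. -/

import Mathlib

set_option maxHeartbeats 1000000
set_option synthInstance.maxHeartbeats 1000000

/-- A (real) Banach space `E` has the diameter two property: every nonempty relatively
weakly open subset of the closed unit ball has diameter two. -/
def HasDiameterTwoProperty (E : Type*) [NormedAddCommGroup E] [NormedSpace ℝ E] : Prop :=
  ∀ W : Set (WeakSpace ℝ E), IsOpen W →
    ((⇑(toWeakSpace ℝ E) ⁻¹' W) ∩ Metric.closedBall (0 : E) 1).Nonempty →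
    Metric.diam ((⇑(toWeakSpace ℝ E) ⁻¹' W) ∩ Metric.closedBall (0 : E) 1) = 2

/- STATEMENT 6: If a Banach space `X` has the diameter two property, then for any
Banach space `Y` the `ℓ∞`-direct sum `X ⊕_∞ Y` (i.e. `X × Y` with the max norm)
has the diameter two property. -/
theorem stmt_6 {X Y : Type*} [NormedAddCommGroup X] [NormedSpace ℝ X] [CompleteSpace X]
    [NormedAddCommGroup Y] [NormedSpace ℝ Y] [CompleteSpace Y]
    (hX : HasDiameterTwoProperty X) :
    HasDiameterTwoProperty (WithLp ⊤ (X × Y)) := by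
  intro W hW hne
  obtain ⟨z, hzW, hzB⟩ := hne
  have hbd : Bornology.IsBounded
      ((⇑(toWeakSpace ℝ (WithLp ⊤ (X × Y))) ⁻¹' W) ∩
        Metric.closedBall (0 : WithLp ⊤ (X × Y)) 1) :=
    Metric.isBounded_closedBall.subset Set.inter_subset_right
  have hnorm : ∀ w : WithLp ⊤ (X × Y), ‖w‖ = max ‖w.fst‖ ‖w.snd‖ := fun w =>
    WithLp.prod_norm_eq_sup w
  let L : X →L[ℝ] WithLp ⊤ (X × Y) :=
    ((WithLp.prodContinuousLinearEquiv ⊤ ℝ X Y).symm : X × Y →L[ℝ] WithLp ⊤ (X × Y)).comp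
      (ContinuousLinearMap.inl ℝ X Y)
  let c : WithLp ⊤ (X × Y) := WithLp.toLp ⊤ (0, z.snd)
  have hL : ∀ x, L x + c = WithLp.toLp ⊤ (x, z.snd) := by
    intro x
    apply (WithLp.equiv ⊤ (X × Y)).injective
    ext <;> simp [L, c]
  let V : Set (WeakSpace ℝ X) :=
    (fun x => WeakSpace.map L x + toWeakSpace ℝ (WithLp ⊤ (X × Y)) c) ⁻¹' W
  have hV : IsOpen V :=
    hW.preimage ((WeakSpace.map L).continuous.add continuous_const)
  have hmem : ∀ x : X, toWeakSpace ℝ X x ∈ V ↔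
      toWeakSpace ℝ (WithLp ⊤ (X × Y)) (WithLp.toLp ⊤ (x, z.snd)) ∈ W := by
    intro x
    rw [← hL x, map_add]
    rfl
  have hz1 : max ‖z.fst‖ ‖z.snd‖ ≤ 1 := by
    rw [← hnorm]; simpa using hzB
  have hd := hX V hV ⟨z.fst, (hmem _).2 hzW, by simpa using (le_max_left _ _).trans hz1⟩
  apply le_antisymm
  · exact (Metric.diam_mono Set.inter_subset_right Metric.isBounded_closedBall).trans
      ((Metric.diam_closedBall zero_le_one).trans (by norm_num))
  · rw [← hd]
    apply Metric.diam_le_of_forall_dist_le Metric.diam_nonneg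
    rintro a ⟨haV, haB⟩ b ⟨hbV, hbB⟩
    have key : ∀ x : X, toWeakSpace ℝ X x ∈ V → x ∈ Metric.closedBall (0 : X) 1 →
        WithLp.toLp ⊤ (x, z.snd) ∈ ((⇑(toWeakSpace ℝ (WithLp ⊤ (X × Y))) ⁻¹' W) ∩
          Metric.closedBall (0 : WithLp ⊤ (X × Y)) 1) := by
      intro x hx hxB
      refine ⟨(hmem x).1 hx, ?_⟩
      rw [mem_closedBall_zero_iff] at hxB ⊢
      rw [hnorm]
      exact max_le hxB ((le_max_right _ _).trans hz1)
    refine le_trans ?_ (Metric.dist_le_diam_of_mem hbd (key a haV haB) (key b hbV hbB))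
    rw [dist_eq_norm, dist_eq_norm, hnorm]
    exact le_max_left _ _
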